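/- For every k ≥ 1 there is an acyclic unique-sink orientation of the graph of the dual cyclic 4-polytope C°(n), n = 12k+1, such that every path from the global source to the global sink that the random facet algorithm can possibly follow has length at least Ω(n²). In particular, the shortest directed source-to-sink path consistent with the random facet recursion has at least c·n² vertices for some constant c > 0 and all sufficiently large k. -/

import Mathlib

/-- Gale's evenness condition for a subset of `{0,…,n-1}`. -/
def galeCond (n : ℕ) (S : Finset ℕ) : Prop :=
  ∀ i ∈ Finset.range n, ∀ j ∈ Finset.range n, i < j → i ∉ S → j ∉ S →
    Even ((S.filter fun k => i < k ∧ k < j).card)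

/-- Vertices of the dual cyclic 4-polytope `C°(n)`. -/
abbrev DCVert (n : ℕ) := {S : Finset ℕ // S ⊆ Finset.range n ∧ S.card = 4 ∧ galeCond n S}

/-- Possible trajectories of the random facet algorithm on an orientation `D` of the
graph of `C°(n)`.  `RFRun n D T v s l` means: started at vertex `v` of the face of
`C°(n)` determined by the set `T` of facet indices, the algorithm can visit the
vertex sequence `l` and stop at the sink `s` of that face.  At a 1-vertex the unique
improving edge is followed; otherwise some facet `i` containing the current vertex is
chosen and the problem restricted to it is solved recursively. -/
inductive RFRun (n : ℕ) (D : DCVert n → DCVert n → Prop) :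
    Finset ℕ → DCVert n → DCVert n → List (DCVert n) → Prop
  | sink (T : Finset ℕ) (v : DCVert n) (hv : T ⊆ v.1)
      (h : ∀ w, T ⊆ w.1 → ¬ D v w) : RFRun n D T v v [v]
  | follow (T : Finset ℕ) (v w s : DCVert n) (l : List (DCVert n))
      (hv : T ⊆ v.1) (hvw : D v w) (hw : T ⊆ w.1)
      (huniq : ∀ w', T ⊆ w'.1 → D v w' → w' = w)
      (h : RFRun n D T w s l) : RFRun n D T v s (v :: l)
  | facet (T : Finset ℕ) (v u s : DCVert n) (l₁ l₂ : List (DCVert n)) (i : ℕ)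
      (hv : T ⊆ v.1) (hi : i ∈ v.1) (hiT : i ∉ T)
      (hout : ∃ w, T ⊆ w.1 ∧ D v w)
      (hmulti : ¬ ∃! w, T ⊆ w.1 ∧ D v w)
      (h₁ : RFRun n D (insert i T) v u l₁)
      (h₂ : RFRun n D T u s l₂) :
      RFRun n D T v s (l₁ ++ l₂.tail)

/-!
Remove the facets `0, …, N` one at a time, each from one of the two ends of the list. Away from the
seam between `N` and `0` every vertex is a union of two pairs of consecutive facets, so the first
of its facets to be removed is its lowest or its highest one, and the vertices with a given first
facet `p` form a path along which the other pair slides. Sort the vertices by the removal time of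
their first facet and, within a path, along a direction that may be chosen freely for each `p`. From
every vertex an edge leads up inside each face that contains a higher vertex, so this is an AUSO,
and the sink of the facet `p` is the upper end of its path.

For the lower bound, remove the facets in blocks of six, alternately from the left and from the
right, and choose the directions so that the sinks of the first two facets of a block have their two
pairs next to each other, while the sinks of the other four have them at opposite ends. Whatever
the algorithm does, it then reaches the vertex made of the two outermost pairs at the beginning of a
block. All four facets through that vertex are among the first two of the current or of the next
block, so it has to go to a vertex whose two pairs lie together, which changes the sum of the facet
labels by `Ω(N)`, whereas one edge changes it by at most `4`. It then comes to the corresponding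
vertex of one of the next two blocks.
-/

/-! ### Vertices -/

section Coordinates

variable {N : ℕ}

/-- The union `{x, x + 1, y, y + 1}` of two pairs of consecutive facets. -/
def pairSet (x y : ℕ) : Finset ℕ := {x, x + 1, y, y + 1}

/-- The union of a pair of consecutive facets with the pair `{N, 0}`, which is cyclically
consecutive among the `N + 1` facets. -/
def wrapSet (N x : ℕ) : Finset ℕ := {0, x, x + 1, N}

lemma mem_pairSet {x y i : ℕ} : i ∈ pairSet x y ↔ i = x ∨ i = x + 1 ∨ i = y ∨ i = y + 1 := by
  simp [pairSet]

lemma mem_wrapSet {x i : ℕ} : i ∈ wrapSet N x ↔ i = 0 ∨ i = x ∨ i = x + 1 ∨ i = N := by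
  simp [wrapSet]

lemma sum_insert_three_of_lt {M : Type*} [AddCommMonoid M] {a b c d : ℕ} (hab : a < b)
    (hbc : b < c) (hcd : c < d) (f : ℕ → M) :
    ∑ i ∈ {a, b, c, d}, f i = f a + f b + f c + f d := by
  have ha : a ∉ ({b, c, d} : Finset ℕ) := by
    simp only [Finset.mem_insert, Finset.mem_singleton]
    omega
  have hb : b ∉ ({c, d} : Finset ℕ) := by
    simp only [Finset.mem_insert, Finset.mem_singleton]
    omega
  rw [Finset.sum_insert ha, Finset.sum_insert hb, Finset.sum_pair hcd.ne, ← add_assoc, ← add_assoc]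

lemma galeCond_insert_three_iff {n a b c d : ℕ} (hab : a < b) (hbc : b < c) (hcd : c < d) :
    galeCond n {a, b, c, d} ↔ ∀ i < n, ∀ j < n, i < j →
      (i ≠ a ∧ i ≠ b ∧ i ≠ c ∧ i ≠ d) → (j ≠ a ∧ j ≠ b ∧ j ≠ c ∧ j ≠ d) →
      ((if i < a ∧ a < j then 1 else 0) + (if i < b ∧ b < j then 1 else 0) +
        (if i < c ∧ c < j then 1 else 0) + (if i < d ∧ d < j then 1 else 0)) % 2 = 0 := by
  simp only [galeCond, Finset.card_filter, sum_insert_three_of_lt hab hbc hcd, Nat.even_iff,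
    Finset.mem_range, Finset.mem_insert, Finset.mem_singleton, not_or, ne_eq]

lemma exists_lt_of_card_eq_four {S : Finset ℕ} (h : S.card = 4) :
    ∃ a b c d, a < b ∧ b < c ∧ c < d ∧ S = {a, b, c, d} := by
  let f := S.orderEmbOfFin h
  refine ⟨f 0, f 1, f 2, f 3, f.strictMono (by decide), f.strictMono (by decide),
    f.strictMono (by decide), ?_⟩
  have himage : Finset.image f Finset.univ = S := Finset.coe_injective (by simp [f])
  rw [← himage]
  ext i
  simp [Fin.exists_fin_succ, eq_comm]

lemma consecutive_of_galeCond {a b c d : ℕ} (hab : a < b) (hbc : b < c) (hcd : c < d) (hd : d ≤ N)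
    (h : galeCond (N + 1) {a, b, c, d}) :
    (b = a + 1 ∧ d = c + 1) ∨ (a = 0 ∧ c = b + 1 ∧ d = N) := by
  rw [galeCond_insert_three_iff hab hbc hcd] at h
  have odd_gap : ∀ i j, i < j → j ≤ N → (i ≠ a ∧ i ≠ b ∧ i ≠ c ∧ i ≠ d) →
      (j ≠ a ∧ j ≠ b ∧ j ≠ c ∧ j ≠ d) → _ := fun i j hij hj => h i (by omega) j (by omega) hij
  by_contra hcon
  by_cases ha : a = 0
  · by_cases hb : b = 1
    · by_cases hc : c = 2
      · have := odd_gap 3 (d + 1) (by omega) (by omega) (by omega) (by omega)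
        split_ifs at this <;> omega
      · have := odd_gap (c - 1) (c + 1) (by omega) (by omega) (by omega) (by omega)
        split_ifs at this <;> omega
    · by_cases hdN : d = N
      · have := odd_gap (b - 1) (b + 1) (by omega) (by omega) (by omega) (by omega)
        split_ifs at this <;> omega
      · have := odd_gap 1 (d + 1) (by omega) (by omega) (by omega) (by omega)
        split_ifs at this <;> omega
  · by_cases hb : b = a + 1
    · have := odd_gap (a - 1) (c + 1) (by omega) (by omega) (by omega) (by omega)
      split_ifs at this <;> omega
    · have := odd_gap (a - 1) (a + 1) (by omega) (by omega) (by omega) (by omega)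
      split_ifs at this <;> omega

lemma DCVert.eq_pairSet_or_eq_wrapSet (v : DCVert (N + 1)) :
    (∃ x y, x + 2 ≤ y ∧ y < N ∧ v.1 = pairSet x y) ∨
      (∃ x, 1 ≤ x ∧ x + 2 ≤ N ∧ v.1 = wrapSet N x) := by
  obtain ⟨S, hS, hcard, hgale⟩ := v
  obtain ⟨a, b, c, d, hab, hbc, hcd, rfl⟩ := exists_lt_of_card_eq_four hcard
  have hd : d < N + 1 := Finset.mem_range.1 (hS (by simp))
  rcases consecutive_of_galeCond hab hbc hcd (by omega) hgale with ⟨rfl, rfl⟩ | ⟨rfl, rfl, rfl⟩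
  · exact Or.inl ⟨a, c, by omega, by omega, rfl⟩
  · exact Or.inr ⟨b, by omega, by omega, rfl⟩

/-- The vertex of `C°(N + 1)` with facets `x, x + 1, y, y + 1`. -/
def pairVertex (x y : ℕ) (hxy : x + 2 ≤ y) (hy : y < N) : DCVert (N + 1) where
  val := pairSet x y
  property := by
    refine ⟨fun i hi => ?_, ?_, ?_⟩
    · rw [mem_pairSet] at hi
      rw [Finset.mem_range]
      omega
    · rw [pairSet, Finset.card_eq_sum_ones,
        sum_insert_three_of_lt (by omega) (by omega) (by omega)]
    · rw [pairSet, galeCond_insert_three_iff (by omega) (by omega) (by omega)]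
      intro i _ j _ _ hi hj
      split_ifs <;> omega

/-- The vertex of `C°(N + 1)` with facets `N, 0, x, x + 1`. -/
def wrapVertex (x : ℕ) (hx : 1 ≤ x) (hxN : x + 2 ≤ N) : DCVert (N + 1) where
  val := wrapSet N x
  property := by
    refine ⟨fun i hi => ?_, ?_, ?_⟩
    · rw [mem_wrapSet] at hi
      rw [Finset.mem_range]
      omega
    · rw [wrapSet, Finset.card_eq_sum_ones,
        sum_insert_three_of_lt (by omega) (by omega) (by omega)]
    · rw [wrapSet, galeCond_insert_three_iff (by omega) (by omega) (by omega)]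
      intro i _ j _ _ hi hj
      split_ifs <;> omega

lemma mem_pairVertex {x y i : ℕ} {hxy : x + 2 ≤ y} {hy : y < N} :
    i ∈ (pairVertex x y hxy hy).1 ↔ i = x ∨ i = x + 1 ∨ i = y ∨ i = y + 1 :=
  mem_pairSet

lemma mem_wrapVertex {x i : ℕ} {hx : 1 ≤ x} {hxN : x + 2 ≤ N} :
    i ∈ (wrapVertex x hx hxN).1 ↔ i = 0 ∨ i = x ∨ i = x + 1 ∨ i = N :=
  mem_wrapSet

end Coordinates

section Wrapped

variable {N : ℕ}

/-- A vertex is wrapped if it lies on both of the cyclically consecutive facets `N` and `0`. -/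
def IsWrapped (v : DCVert (N + 1)) : Prop := 0 ∈ v.1 ∧ N ∈ v.1

/-- The sum of the labels of the facets through a vertex. -/
def weight (v : DCVert (N + 1)) : ℤ := ∑ i ∈ v.1, (i : ℤ)

lemma DCVert.le_of_mem {v : DCVert (N + 1)} {i : ℕ} (hi : i ∈ v.1) : i ≤ N :=
  Nat.lt_succ_iff.1 (Finset.mem_range.1 (v.2.1 hi))

lemma weight_of_eq_pairSet {v : DCVert (N + 1)} {x y : ℕ} (hxy : x + 2 ≤ y)
    (hv : v.1 = pairSet x y) : weight v = 2 * x + 2 * y + 2 := by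
  rw [weight, hv, pairSet, sum_insert_three_of_lt (by omega) (by omega) (by omega)]
  push_cast
  ring

lemma weight_of_eq_wrapSet {v : DCVert (N + 1)} {x : ℕ} (hx : 1 ≤ x) (hxN : x + 2 ≤ N)
    (hv : v.1 = wrapSet N x) : weight v = N + 2 * x + 1 := by
  rw [weight, hv, wrapSet, sum_insert_three_of_lt (by omega) (by omega) (by omega)]
  push_cast
  ring

lemma isWrapped_of_eq_wrapSet {v : DCVert (N + 1)} {x : ℕ} (hv : v.1 = wrapSet N x) :
    IsWrapped v := by
  simp [IsWrapped, hv, mem_wrapSet]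

lemma isWrapped_iff_of_eq_pairSet {v : DCVert (N + 1)} {x y : ℕ} (hxy : x + 2 ≤ y) (hy : y < N)
    (hv : v.1 = pairSet x y) : IsWrapped v ↔ x = 0 ∧ y + 1 = N := by
  rw [IsWrapped, hv, mem_pairSet, mem_pairSet]
  omega

/-- The unwrapped vertex `v` consists of the pairs `{x, x + 1}` and `{y, y + 1}`. -/
structure IsPair (v : DCVert (N + 1)) (x y : ℕ) : Prop where
  gap : x + 2 ≤ y
  lt : y < N
  unwrapped : 0 < x ∨ y + 1 < N
  eq : v.1 = pairSet x y

lemma exists_isPair {x y : ℕ} (hxy : x + 2 ≤ y) (hy : y < N) (h : 0 < x ∨ y + 1 < N) :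
    ∃ v : DCVert (N + 1), IsPair v x y :=
  ⟨pairVertex x y hxy hy, hxy, hy, h, rfl⟩

lemma exists_isPair_of_not_isWrapped {v : DCVert (N + 1)} (hv : ¬IsWrapped v) :
    ∃ x y, IsPair v x y := by
  rcases v.eq_pairSet_or_eq_wrapSet with ⟨x, y, hxy, hy, h⟩ | ⟨x, -, -, h⟩
  · rw [isWrapped_iff_of_eq_pairSet hxy hy h] at hv
    exact ⟨x, y, hxy, hy, by omega, h⟩
  · exact absurd (isWrapped_of_eq_wrapSet h) hv

namespace IsPair

variable {v : DCVert (N + 1)} {x y : ℕ}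

lemma mem_iff (h : IsPair v x y) {i : ℕ} :
    i ∈ v.1 ↔ i = x ∨ i = x + 1 ∨ i = y ∨ i = y + 1 := by
  rw [h.eq, mem_pairSet]

lemma not_isWrapped (h : IsPair v x y) : ¬IsWrapped v := by
  rw [isWrapped_iff_of_eq_pairSet h.gap h.lt h.eq]
  have := h.unwrapped
  omega

lemma weight_eq (h : IsPair v x y) : weight v = 2 * x + 2 * y + 2 :=
  weight_of_eq_pairSet h.gap h.eq

end IsPair

lemma IsWrapped.eq_wrapSet_or_eq_pairSet {v : DCVert (N + 1)} (hv : IsWrapped v) :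
    (∃ x, 1 ≤ x ∧ x + 2 ≤ N ∧ v.1 = wrapSet N x) ∨ (3 ≤ N ∧ v.1 = pairSet 0 (N - 1)) := by
  rcases v.eq_pairSet_or_eq_wrapSet with ⟨x, y, hxy, hy, h⟩ | h
  · obtain ⟨rfl, rfl⟩ := (isWrapped_iff_of_eq_pairSet hxy hy h).1 hv
    exact Or.inr ⟨by omega, h⟩
  · exact Or.inl h

-- For odd `N` the corner `{0, 1, N - 1, N}` has the weight of the wrapped vertex in the middle.
lemma eq_of_isWrapped_of_weight_eq (hN : Even N) {v w : DCVert (N + 1)} (hv : IsWrapped v)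
    (hw : IsWrapped w) (h : weight v = weight w) : v = w := by
  obtain ⟨m, rfl⟩ := hN
  rcases hv.eq_wrapSet_or_eq_pairSet with ⟨x, hx, hxN, hv⟩ | ⟨hN, hv⟩ <;>
    rcases hw.eq_wrapSet_or_eq_pairSet with ⟨y, hy, hyN, hw⟩ | ⟨hN', hw⟩
  · rw [weight_of_eq_wrapSet hx hxN hv, weight_of_eq_wrapSet hy hyN hw] at h
    obtain rfl : x = y := by omega
    exact Subtype.ext (hv.trans hw.symm)
  · rw [weight_of_eq_wrapSet hx hxN hv, weight_of_eq_pairSet (by omega) hw] at h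
    omega
  · rw [weight_of_eq_pairSet (by omega) hv, weight_of_eq_wrapSet hy hyN hw] at h
    omega
  · exact Subtype.ext (hv.trans hw.symm)

lemma card_inter_eq_three {v w : DCVert (N + 1)} (hvw : v ≠ w) {i : ℕ} (hi : i ∈ v.1)
    (h : v.1.erase i ⊆ w.1) : (v.1 ∩ w.1).card = 3 := by
  have hge : 3 ≤ (v.1 ∩ w.1).card := by
    have := Finset.card_le_card (Finset.subset_inter (Finset.erase_subset i v.1) h)
    rwa [Finset.card_erase_of_mem hi, v.2.2.1] at this
  have hne : (v.1 ∩ w.1).card ≠ 4 := fun h4 => hvw <| Subtype.ext <|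
    Finset.eq_of_subset_of_card_le
      (Finset.inter_eq_left.1 (Finset.eq_of_subset_of_card_le Finset.inter_subset_left
        (by rw [h4, v.2.2.1])))
      (by rw [v.2.2.1, w.2.2.1])
  have := Finset.card_le_card (Finset.inter_subset_left (s₁ := v.1) (s₂ := w.1))
  rw [v.2.2.1] at this
  omega

lemma exists_erase_subset_of_card_inter {v w : DCVert (N + 1)} (h : (v.1 ∩ w.1).card = 3) :
    ∃ i ∈ v.1, v.1.erase i ⊆ w.1 := by
  obtain ⟨i, hi⟩ : ∃ i, v.1 \ w.1 = {i} := by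
    rw [← Finset.card_eq_one, Finset.card_sdiff, Finset.inter_comm, h, v.2.2.1]
  refine ⟨i, (Finset.mem_sdiff.1 (hi.symm ▸ Finset.mem_singleton_self i)).1, fun j hj => ?_⟩
  rw [Finset.mem_erase] at hj
  by_contra hjw
  exact hj.1 (Finset.mem_singleton.1 (hi ▸ Finset.mem_sdiff.2 ⟨hj.2, hjw⟩))

lemma abs_weight_sub_le {v w : DCVert (N + 1)} (hv : ¬IsWrapped v) (hw : ¬IsWrapped w)
    (h : (v.1 ∩ w.1).card = 3) : |weight w - weight v| ≤ 4 := by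
  obtain ⟨i, hi, hsub⟩ := exists_erase_subset_of_card_inter h
  obtain ⟨x, y, hv⟩ := exists_isPair_of_not_isWrapped hv
  obtain ⟨a, b, hw⟩ := exists_isPair_of_not_isWrapped hw
  rw [hv.weight_eq, hw.weight_eq, abs_le]
  have mem : ∀ j, (j = x ∨ j = x + 1 ∨ j = y ∨ j = y + 1) → j ≠ i →
      j = a ∨ j = a + 1 ∨ j = b ∨ j = b + 1 := fun j hj hji =>
    hw.mem_iff.1 (hsub (Finset.mem_erase.2 ⟨hji, hv.mem_iff.2 hj⟩))
  have hx := mem x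
  have hx' := mem (x + 1)
  have hy := mem y
  have hy' := mem (y + 1)
  have hxy := hv.gap
  have hab := hw.gap
  rcases hv.mem_iff.1 hi with rfl | rfl | rfl | rfl <;> omega

end Wrapped

/-! ### Peelings -/

/-- A schedule for removing the facets `0, …, N` one at a time, from the two ends of the list.
Facet `i` is removed at `time i`; the facets through a vertex whose first removed one goes at
time `t` form an interval of choices, which the orientation scans in the direction of increasing
labels if `t` belongs to `ascending` and of decreasing labels otherwise. -/
structure Peeling (N : ℕ) where
  time : ℕ → ℕ
  ascending : Set ℕ
  time_injOn : Set.InjOn time (Set.Iic N)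
  unimodal : ∀ ⦃x y z⦄, x ≤ y → y ≤ z → z ≤ N → time x ≤ time y ∨ time z ≤ time y

namespace Peeling

variable {N : ℕ} (P : Peeling N) {v w : DCVert (N + 1)} {p : ℕ}

lemma time_ne {i j : ℕ} (hi : i ≤ N) (hj : j ≤ N) (hij : i ≠ j) : P.time i ≠ P.time j :=
  fun h => hij (P.time_injOn hi hj h)

lemma time_lt_of_lt_of_le {x i z : ℕ} (hxi : x < i) (hiz : i ≤ z) (hz : z ≤ N)
    (h : P.time x < P.time z) : P.time x < P.time i := by
  have := P.unimodal hxi.le hiz hz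
  have := P.time_ne (by omega : x ≤ N) (by omega : i ≤ N) hxi.ne
  omega

lemma time_lt_of_le_of_lt {x i z : ℕ} (hxi : x ≤ i) (hiz : i < z) (hz : z ≤ N)
    (h : P.time z < P.time x) : P.time z < P.time i := by
  have := P.unimodal hxi hiz.le hz
  have := P.time_ne (by omega : i ≤ N) hz hiz.ne
  omega

lemma lt_of_time_lt_left {x i z : ℕ} (hxz : x < z) (hz : z ≤ N) (h : P.time x < P.time z)
    (hi : P.time x < P.time i) : x < i := by
  by_contra hix
  have := P.unimodal (not_lt.1 hix) hxz.le hz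
  omega

lemma lt_of_time_lt_right {x i z : ℕ} (hxz : x < z) (hi : i ≤ N) (h : P.time z < P.time x)
    (hiz : P.time z < P.time i) : i < z := by
  by_contra hzi
  have := P.unimodal hxz.le (not_lt.1 hzi) hi
  omega

/-- `P.IsFirst v p` says that `p` is the facet through `v` that is removed first. -/
def IsFirst (v : DCVert (N + 1)) (p : ℕ) : Prop :=
  p ∈ v.1 ∧ ∀ i ∈ v.1, P.time p ≤ P.time i

/-- The time at which the first facet through `v` is removed. -/
def stage (v : DCVert (N + 1)) : ℕ :=
  v.1.inf' (Finset.card_pos.1 (v.2.2.1.symm ▸ Nat.zero_lt_succ 3)) P.time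

lemma stage_le_time (hp : p ∈ v.1) : P.stage v ≤ P.time p :=
  Finset.inf'_le _ hp

lemma lt_stage_iff {t : ℕ} : t < P.stage v ↔ ∀ i ∈ v.1, t < P.time i :=
  Finset.lt_inf'_iff _

lemma exists_isFirst (v : DCVert (N + 1)) : ∃ p, P.IsFirst v p :=
  v.1.exists_min_image P.time (Finset.card_pos.1 (v.2.2.1.symm ▸ Nat.zero_lt_succ 3))

variable {P}

lemma IsFirst.stage_eq (h : P.IsFirst v p) : P.stage v = P.time p :=
  le_antisymm (P.stage_le_time h.1) (Finset.le_inf' _ _ h.2)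

lemma isFirst_iff_stage_eq (hp : p ∈ v.1) : P.IsFirst v p ↔ P.stage v = P.time p :=
  ⟨IsFirst.stage_eq, fun h => ⟨hp, fun _ hi => h ▸ P.stage_le_time hi⟩⟩

lemma IsFirst.of_stage_eq (hv : P.IsFirst v p) (h : P.stage w = P.stage v) : P.IsFirst w p := by
  obtain ⟨q, hq⟩ := P.exists_isFirst w
  have := P.time_injOn (hq.1 |> DCVert.le_of_mem) (hv.1 |> DCVert.le_of_mem)
    (by rw [← hq.stage_eq, h, hv.stage_eq])
  exact this ▸ hq

lemma IsFirst.time_lt (h : P.IsFirst v p) {i : ℕ} (hi : i ∈ v.1) (hip : i ≠ p) :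
    P.time p < P.time i :=
  lt_of_le_of_ne (h.2 i hi)
    (P.time_ne (DCVert.le_of_mem h.1) (DCVert.le_of_mem hi) hip.symm)

-- The middle facets of a vertex are never removed first because facets are removed from the ends.
lemma IsFirst.eq_or_eq {x y : ℕ} (h : P.IsFirst v p) (hv : IsPair v x y) :
    (p = x ∧ P.time x < P.time (y + 1)) ∨ (p = y + 1 ∧ P.time (y + 1) < P.time x) := by
  have hx : x ∈ v.1 := hv.mem_iff.2 (by omega)
  have hy : y + 1 ∈ v.1 := hv.mem_iff.2 (by omega)
  have hxy := hv.gap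
  have hp := hv.mem_iff.1 h.1
  by_cases hpx : p = x
  · exact Or.inl ⟨hpx, hpx ▸ h.time_lt hy (by omega)⟩
  · by_cases hpy : p = y + 1
    · exact Or.inr ⟨hpy, hpy ▸ h.time_lt hx (by omega)⟩
    · have := h.time_lt hx (Ne.symm hpx)
      have := h.time_lt hy (Ne.symm hpy)
      have := P.unimodal (by omega : x ≤ p) (by omega : p ≤ y + 1) (DCVert.le_of_mem hy)
      omega

lemma isFirst_left {x y : ℕ} (hv : IsPair v x y) (h : P.time x < P.time (y + 1)) :
    P.IsFirst v x := by
  refine ⟨hv.mem_iff.2 (Or.inl rfl), fun i hi => ?_⟩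
  have := hv.gap
  have := hv.lt
  rcases eq_or_ne i x with rfl | hix
  · rfl
  · rw [hv.mem_iff] at hi
    exact (P.time_lt_of_lt_of_le (by omega) (by omega) (by omega) h).le

lemma isFirst_right {x y : ℕ} (hv : IsPair v x y) (h : P.time (y + 1) < P.time x) :
    P.IsFirst v (y + 1) := by
  refine ⟨hv.mem_iff.2 (by omega), fun i hi => ?_⟩
  have := hv.gap
  have := hv.lt
  rcases eq_or_ne i (y + 1) with rfl | hix
  · rfl
  · rw [hv.mem_iff] at hi
    exact (P.time_lt_of_le_of_lt (by omega) (by omega) (by omega) h).le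

lemma IsFirst.exists_common_pair (hv : ¬IsWrapped v) (hw : ¬IsWrapped w) (hvp : P.IsFirst v p)
    (hwp : P.IsFirst w p) :
    (∃ y y', IsPair v p y ∧ IsPair w p y') ∨
      ∃ x x' y, p = y + 1 ∧ IsPair v x y ∧ IsPair w x' y := by
  obtain ⟨x, y, hv⟩ := exists_isPair_of_not_isWrapped hv
  obtain ⟨x', y', hw⟩ := exists_isPair_of_not_isWrapped hw
  have := hv.gap
  have := hw.gap
  rcases hvp.eq_or_eq hv with ⟨rfl, hlt⟩ | ⟨rfl, hlt⟩ <;>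
    rcases hwp.eq_or_eq hw with ⟨h, hlt'⟩ | ⟨h, hlt'⟩
  · exact Or.inl ⟨y, y', hv, h ▸ hw⟩
  · have := P.lt_of_time_lt_left (by omega) hv.lt hlt (h ▸ hlt')
    omega
  · have := P.lt_of_time_lt_right (by omega) hw.lt hlt (h ▸ hlt')
    omega
  · obtain rfl : y = y' := by omega
    exact Or.inr ⟨x, x', y, rfl, hv, hw⟩

open Classical in
/-- The weight of a vertex, signed by the scanning direction chosen for its stage. -/
noncomputable def score (P : Peeling N) (v : DCVert (N + 1)) : ℤ :=
  if P.stage v ∈ P.ascending then weight v else -weight v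

open Classical in
/-- The quantity that increases along the orientation. Wrapped vertices come first, ordered by
weight; the others are ordered by stage and, within a stage, by score. -/
noncomputable def height (P : Peeling N) (v : DCVert (N + 1)) : ℕ ×ₗ ℤ :=
  if IsWrapped v then toLex (0, weight v) else toLex (P.stage v + 1, P.score v)

lemma IsFirst.score_of_mem (h : P.IsFirst v p) (hp : P.time p ∈ P.ascending) :
    P.score v = weight v :=
  if_pos (h.stage_eq ▸ hp)

lemma IsFirst.score_of_notMem (h : P.IsFirst v p) (hp : P.time p ∉ P.ascending) :
    P.score v = -weight v :=
  if_neg (h.stage_eq ▸ hp)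

lemma height_lt_of_isWrapped (hv : IsWrapped v) (hw : ¬IsWrapped w) :
    P.height v < P.height w := by
  simp [height, hv, hw, Prod.Lex.toLex_lt_toLex]

lemma height_lt_iff_of_isWrapped (hv : IsWrapped v) (hw : IsWrapped w) :
    P.height v < P.height w ↔ weight v < weight w := by
  simp [height, hv, hw, Prod.Lex.toLex_lt_toLex]

lemma height_lt_iff_of_not_isWrapped (hv : ¬IsWrapped v) (hw : ¬IsWrapped w) :
    P.height v < P.height w ↔
      P.stage v < P.stage w ∨ P.stage v = P.stage w ∧ P.score v < P.score w := by
  simp [height, hv, hw, Prod.Lex.toLex_lt_toLex]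

lemma height_lt_of_stage_lt (hw : ¬IsWrapped w) (h : P.stage v < P.stage w) :
    P.height v < P.height w := by
  by_cases hv : IsWrapped v
  · exact height_lt_of_isWrapped hv hw
  · exact (height_lt_iff_of_not_isWrapped hv hw).2 (Or.inl h)

lemma not_isWrapped_of_height_le (h : P.height v ≤ P.height w) (hv : ¬IsWrapped v) :
    ¬IsWrapped w :=
  fun hw => (height_lt_of_isWrapped hw hv).not_ge h

lemma height_injective (hN : Even N) : Function.Injective P.height := by
  intro v w h
  by_cases hv : IsWrapped v <;> by_cases hw : IsWrapped w
  · refine eq_of_isWrapped_of_weight_eq hN hv hw ?_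
    simpa [height, hv, hw] using h
  · exact absurd h (height_lt_of_isWrapped hv hw).ne
  · exact absurd h (height_lt_of_isWrapped hw hv).ne'
  · obtain ⟨hstage, hscore⟩ : P.stage v = P.stage w ∧ P.score v = P.score w := by
      simpa [height, hv, hw] using h
    obtain ⟨p, hvp⟩ := P.exists_isFirst v
    have hweight : weight v = weight w := by
      by_cases hp : P.stage v ∈ P.ascending <;>
        simpa [score, ← hstage, hp] using hscore
    rcases hvp.exists_common_pair hv hw (hvp.of_stage_eq hstage.symm) with
      ⟨y, y', hv, hw⟩ | ⟨x, x', y, -, hv, hw⟩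
    · rw [hv.weight_eq, hw.weight_eq] at hweight
      obtain rfl : y = y' := by omega
      exact Subtype.ext (hv.eq.trans hw.eq.symm)
    · rw [hv.weight_eq, hw.weight_eq] at hweight
      obtain rfl : x = x' := by omega
      exact Subtype.ext (hv.eq.trans hw.eq.symm)

end Peeling

/-! ### The orientation of a peeling -/

/-- `v` is a sink of the face of `C°(n)` cut out by the facets in `T`. -/
def IsFaceSink {n : ℕ} (D : DCVert n → DCVert n → Prop) (T : Finset ℕ) (v : DCVert n) : Prop :=
  T ⊆ v.1 ∧ ∀ w, T ⊆ w.1 → ¬D v w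

namespace Peeling

variable {N : ℕ} (P : Peeling N) {v w : DCVert (N + 1)} {p : ℕ}

/-- The orientation of the edges of `C°(N + 1)` towards increasing height. -/
def orient (v w : DCVert (N + 1)) : Prop :=
  (v.1 ∩ w.1).card = 3 ∧ P.height v < P.height w

variable {P}

lemma orient_of_erase_subset {i : ℕ} (h : P.height v < P.height w) (hi : i ∈ v.1)
    (hsub : v.1.erase i ⊆ w.1) : P.orient v w :=
  ⟨card_inter_eq_three (fun hvw => h.ne (hvw ▸ rfl)) hi hsub, h⟩

lemma orient_adj_iff (hN : Even N) : (v.1 ∩ w.1).card = 3 ↔ P.orient v w ∨ P.orient w v := by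
  refine ⟨fun h => ?_, ?_⟩
  · have hvw : v ≠ w := by
      rintro rfl
      rw [Finset.inter_self, v.2.2.1] at h
      omega
    rcases lt_or_gt_of_ne ((height_injective (P := P) hN).ne hvw) with hlt | hlt
    · exact Or.inl ⟨h, hlt⟩
    · exact Or.inr ⟨Finset.inter_comm v.1 w.1 ▸ h, hlt⟩
  · rintro (h | h)
    · exact h.1
    · exact Finset.inter_comm v.1 w.1 ▸ h.1

lemma height_lt_of_transGen (h : Relation.TransGen P.orient v w) : P.height v < P.height w := by
  induction h with
  | single h => exact h.2
  | tail _ h ih => exact ih.trans h.2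

lemma not_isWrapped_of_orient (h : P.orient v w) (hv : ¬IsWrapped v) : ¬IsWrapped w :=
  not_isWrapped_of_height_le h.2.le hv

-- The partner of the removed facet joins its other neighbour, pushing the second pair if necessary.
lemma exists_leave_left {x y : ℕ} (hw : IsPair w x y) (hlt : P.time x < P.time (y + 1))
    (hv : P.time x < P.stage v) :
    ∃ w', ¬IsWrapped w' ∧ P.time x < P.stage w' ∧ w.1.erase x ⊆ w'.1 := by
  rw [lt_stage_iff] at hv
  have hxy := hw.gap
  have hy := hw.lt
  have hgt : ∀ i ∈ v.1, x < i := fun i hi =>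
    P.lt_of_time_lt_left (by omega) (by omega) hlt (hv i hi)
  obtain ⟨a, b, hab⟩ := exists_isPair_of_not_isWrapped fun h : IsWrapped v =>
    Nat.not_lt_zero x (hgt 0 h.1)
  have ha := hgt a (hab.mem_iff.2 (by omega))
  have hb := hv (b + 1) (hab.mem_iff.2 (by omega))
  have hgap := hab.gap
  have hbN := hab.lt
  obtain ⟨z, hz, hzN, hyz⟩ : ∃ z, x + 3 ≤ z ∧ z < N ∧ (z = y ∨ y = x + 2 ∧ z = x + 3) := by
    by_cases h : y = x + 2
    · exact ⟨x + 3, le_rfl, by omega, Or.inr ⟨h, rfl⟩⟩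
    · exact ⟨y, by omega, hy, Or.inl rfl⟩
  obtain ⟨w', hw'⟩ := exists_isPair (x := x + 1) hz hzN (by omega)
  refine ⟨w', hw'.not_isWrapped, (P.lt_stage_iff).2 fun i hi => ?_, fun i hi => ?_⟩
  · rw [hw'.mem_iff] at hi
    rcases le_or_gt i (y + 1) with hiy | hiy
    · exact P.time_lt_of_lt_of_le (by omega) hiy (by omega) hlt
    · exact P.time_lt_of_lt_of_le (by omega) (by omega : i ≤ b + 1) (by omega) hb
  · rw [Finset.mem_erase, hw.mem_iff] at hi
    rw [hw'.mem_iff]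
    omega

lemma exists_leave_right {x y : ℕ} (hw : IsPair w x y) (hlt : P.time (y + 1) < P.time x)
    (hv : P.time (y + 1) < P.stage v) :
    ∃ w', ¬IsWrapped w' ∧ P.time (y + 1) < P.stage w' ∧ w.1.erase (y + 1) ⊆ w'.1 := by
  rw [lt_stage_iff] at hv
  have hxy := hw.gap
  have hy := hw.lt
  have hgt : ∀ i ∈ v.1, i < y + 1 := fun i hi =>
    P.lt_of_time_lt_right (by omega) (DCVert.le_of_mem hi) hlt (hv i hi)
  obtain ⟨a, b, hab⟩ := exists_isPair_of_not_isWrapped fun h : IsWrapped v =>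
    (hgt N h.2).not_ge (by omega)
  have ha := hv a (hab.mem_iff.2 (by omega))
  have hb := hgt (b + 1) (hab.mem_iff.2 (by omega))
  have hgap := hab.gap
  obtain ⟨z, hz, hxz⟩ : ∃ z, z + 3 ≤ y ∧ (z = x ∨ y = x + 2 ∧ z + 1 = x) := by
    by_cases h : y = x + 2
    · exact ⟨x - 1, by omega, Or.inr ⟨h, by omega⟩⟩
    · exact ⟨x, by omega, Or.inl rfl⟩
  obtain ⟨w', hw'⟩ := exists_isPair (x := z) (y := y - 1) (N := N) (by omega) (by omega) (by omega)
  refine ⟨w', hw'.not_isWrapped, (P.lt_stage_iff).2 fun i hi => ?_, fun i hi => ?_⟩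
  · rw [hw'.mem_iff] at hi
    rcases le_or_gt x i with hxi | hxi
    · exact P.time_lt_of_le_of_lt hxi (by omega) (by omega) hlt
    · exact P.time_lt_of_le_of_lt (by omega : a ≤ i) (by omega) (by omega) ha
  · rw [Finset.mem_erase, hw.mem_iff] at hi
    rw [hw'.mem_iff]
    omega

lemma IsFirst.exists_leave (hw : ¬IsWrapped w) (hp : P.IsFirst w p)
    (hv : P.time p < P.stage v) :
    ∃ w', ¬IsWrapped w' ∧ P.time p < P.stage w' ∧ w.1.erase p ⊆ w'.1 := by
  obtain ⟨x, y, hw⟩ := exists_isPair_of_not_isWrapped hw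
  rcases hp.eq_or_eq hw with ⟨rfl, hlt⟩ | ⟨rfl, hlt⟩
  · exact exists_leave_left hw hlt hv
  · exact exists_leave_right hw hlt hv

lemma IsFirst.score_lt_iff (hv : P.IsFirst v p) (hw : P.IsFirst w p) :
    P.score v < P.score w ↔ P.time p ∈ P.ascending ∧ weight v < weight w ∨
      P.time p ∉ P.ascending ∧ weight w < weight v := by
  by_cases hp : P.time p ∈ P.ascending
  · simp [hv.score_of_mem hp, hw.score_of_mem hp, hp]
  · simp [hv.score_of_notMem hp, hw.score_of_notMem hp, hp]

lemma IsFirst.height_lt (hv : ¬IsWrapped v) (hw : ¬IsWrapped w) (hvp : P.IsFirst v p)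
    (hwp : P.IsFirst w p) (h : P.score v < P.score w) : P.height v < P.height w :=
  (height_lt_iff_of_not_isWrapped hv hw).2 (Or.inr ⟨hvp.stage_eq.trans hwp.stage_eq.symm, h⟩)

lemma inter_subset_erase_of_notMem {S S' : Finset ℕ} {i : ℕ} (hi : i ∉ S') : S ∩ S' ⊆ S.erase i :=
  Finset.subset_erase.2 ⟨Finset.inter_subset_left, fun h => hi (Finset.mem_inter.1 h).2⟩

-- The pair away from `p` moves by one towards its position in `v`.
lemma exists_move_left {y y' : ℕ} (hw : IsPair w p y) (hv : IsPair v p y')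
    (hwp : P.IsFirst w p) (hvp : P.IsFirst v p) (h : P.score w < P.score v) :
    ∃ w', P.orient w w' ∧ w.1 ∩ v.1 ⊆ w'.1 := by
  have hgap := hw.gap
  have hgap' := hv.gap
  have hN := hw.lt
  have hN' := hv.lt
  have hcorner := hv.unwrapped
  have hcorner' := hw.unwrapped
  have hlt := hwp.time_lt (hw.mem_iff.2 (by omega) : y + 1 ∈ w.1) (by omega)
  have hlt' := hvp.time_lt (hv.mem_iff.2 (by omega) : y' + 1 ∈ v.1) (by omega)
  rw [hwp.score_lt_iff hvp, hw.weight_eq, hv.weight_eq] at h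
  obtain ⟨z, i, hz⟩ : ∃ z i, (P.time p ∈ P.ascending ∧ y < y' ∧ z = y + 1 ∧ i = y) ∨
      (P.time p ∉ P.ascending ∧ y' < y ∧ z + 1 = y ∧ i = y + 1) := by
    rcases h with ⟨ha, h⟩ | ⟨ha, h⟩
    · exact ⟨y + 1, y, Or.inl ⟨ha, by omega, rfl, rfl⟩⟩
    · exact ⟨y - 1, y + 1, Or.inr ⟨ha, by omega, by omega, rfl⟩⟩
  obtain ⟨w', hw'⟩ := exists_isPair (x := p) (y := z) (N := N) (by omega) (by omega) (by omega)
  have hwp' : P.IsFirst w' p := isFirst_left hw' <| by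
    rcases hz with ⟨-, hz⟩ | ⟨-, hz⟩
    · exact P.time_lt_of_lt_of_le (by omega) (by omega) (by omega) hlt'
    · exact P.time_lt_of_lt_of_le (by omega) (by omega) (by omega) hlt
  have hheight : P.height w < P.height w' := by
    refine hwp.height_lt hw.not_isWrapped hw'.not_isWrapped hwp' ?_
    rw [hwp.score_lt_iff hwp', hw.weight_eq, hw'.weight_eq]
    rcases hz with ⟨ha, hz⟩ | ⟨ha, hz⟩
    · exact Or.inl ⟨ha, by omega⟩
    · exact Or.inr ⟨ha, by omega⟩
  have hsub : w.1.erase i ⊆ w'.1 := fun j hj => by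
    rw [Finset.mem_erase, hw.mem_iff] at hj
    rw [hw'.mem_iff]
    omega
  have hiv : i ∉ v.1 := by
    rw [hv.mem_iff]
    omega
  exact ⟨w', orient_of_erase_subset hheight (hw.mem_iff.2 (by omega)) hsub,
    (inter_subset_erase_of_notMem hiv).trans hsub⟩

lemma exists_move_right {x x' y : ℕ} (hw : IsPair w x y) (hv : IsPair v x' y)
    (hwp : P.IsFirst w (y + 1)) (hvp : P.IsFirst v (y + 1)) (h : P.score w < P.score v) :
    ∃ w', P.orient w w' ∧ w.1 ∩ v.1 ⊆ w'.1 := by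
  have hgap := hw.gap
  have hgap' := hv.gap
  have hN := hw.lt
  have hcorner := hw.unwrapped
  have hcorner' := hv.unwrapped
  have hlt := hwp.time_lt (hw.mem_iff.2 (by omega) : x ∈ w.1) (by omega)
  have hlt' := hvp.time_lt (hv.mem_iff.2 (by omega) : x' ∈ v.1) (by omega)
  rw [hwp.score_lt_iff hvp, hw.weight_eq, hv.weight_eq] at h
  obtain ⟨z, i, hz⟩ : ∃ z i, (P.time (y + 1) ∈ P.ascending ∧ x < x' ∧ z = x + 1 ∧ i = x) ∨
      (P.time (y + 1) ∉ P.ascending ∧ x' < x ∧ z + 1 = x ∧ i = x + 1) := by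
    rcases h with ⟨ha, h⟩ | ⟨ha, h⟩
    · exact ⟨x + 1, x, Or.inl ⟨ha, by omega, rfl, rfl⟩⟩
    · exact ⟨x - 1, x + 1, Or.inr ⟨ha, by omega, by omega, rfl⟩⟩
  obtain ⟨w', hw'⟩ := exists_isPair (x := z) (y := y) (N := N) (by omega) hN (by omega)
  have hwp' : P.IsFirst w' (y + 1) := isFirst_right hw' <| by
    rcases hz with ⟨-, hz⟩ | ⟨-, hz⟩
    · exact P.time_lt_of_le_of_lt (by omega) (by omega) (by omega) hlt
    · exact P.time_lt_of_le_of_lt (by omega) (by omega) (by omega) hlt'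
  have hheight : P.height w < P.height w' := by
    refine hwp.height_lt hw.not_isWrapped hw'.not_isWrapped hwp' ?_
    rw [hwp.score_lt_iff hwp', hw.weight_eq, hw'.weight_eq]
    rcases hz with ⟨ha, hz⟩ | ⟨ha, hz⟩
    · exact Or.inl ⟨ha, by omega⟩
    · exact Or.inr ⟨ha, by omega⟩
  have hsub : w.1.erase i ⊆ w'.1 := fun j hj => by
    rw [Finset.mem_erase, hw.mem_iff] at hj
    rw [hw'.mem_iff]
    omega
  have hiv : i ∉ v.1 := by
    rw [hv.mem_iff]
    omega
  exact ⟨w', orient_of_erase_subset hheight (hw.mem_iff.2 (by omega)) hsub,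
    (inter_subset_erase_of_notMem hiv).trans hsub⟩

lemma IsFirst.exists_move (hw : ¬IsWrapped w) (hv : ¬IsWrapped v) (hwp : P.IsFirst w p)
    (hvp : P.IsFirst v p) (h : P.score w < P.score v) :
    ∃ w', P.orient w w' ∧ w.1 ∩ v.1 ⊆ w'.1 := by
  rcases hwp.exists_common_pair hw hv hvp with ⟨y, y', hw, hv⟩ | ⟨x, x', y, rfl, hw, hv⟩
  · exact exists_move_left hw hv hwp hvp h
  · exact exists_move_right hw hv hwp hvp h

lemma orient_wrapVertex {x i : ℕ} (hx : 1 ≤ x) (hxN : x + 2 ≤ N) (hw : IsWrapped w)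
    (h : weight w < N + 2 * x + 1) (hi : i ∈ w.1)
    (hsub : ∀ j ∈ w.1, j ≠ i → j = 0 ∨ j = x ∨ j = x + 1 ∨ j = N) :
    P.orient w (wrapVertex x hx hxN) := by
  refine orient_of_erase_subset ?_ hi fun j hj =>
    mem_wrapVertex.2 (hsub j (Finset.mem_of_mem_erase hj) (Finset.ne_of_mem_erase hj))
  rwa [height_lt_iff_of_isWrapped hw (isWrapped_of_eq_wrapSet rfl),
    weight_of_eq_wrapSet (v := wrapVertex x hx hxN) hx hxN rfl]

lemma exists_orient_of_eq_wrapSet {x : ℕ} (hx : 1 ≤ x) (hxN : x + 2 ≤ N) (hw : w.1 = wrapSet N x)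
    (hv : IsWrapped v) (h : weight w < weight v) :
    ∃ w', P.orient w w' ∧ w.1 ∩ v.1 ⊆ w'.1 := by
  have hww := isWrapped_of_eq_wrapSet hw
  have hwx := weight_of_eq_wrapSet hx hxN hw
  have hmem : ∀ {i}, i ∈ w.1 ↔ i = 0 ∨ i = x ∨ i = x + 1 ∨ i = N := by
    simp only [hw, mem_wrapSet, implies_true]
  by_cases hcorner : x = 1 ∧ v.1 = pairSet 0 (N - 1)
  · obtain ⟨rfl, hv'⟩ := hcorner
    refine ⟨v, orient_of_erase_subset (i := 2) ((height_lt_iff_of_isWrapped hww hv).2 h)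
      (hmem.2 (by omega)) fun i hi => ?_, Finset.inter_subset_right⟩
    rw [Finset.mem_erase, hmem] at hi
    rw [hv', mem_pairSet]
    omega
  · have hvmem : x + 3 ≤ N ∧ ∀ i ∈ w.1, i ∈ v.1 → i = 0 ∨ i = x + 1 ∨ i = x + 2 ∨ i = N := by
      simp only [hmem]
      rcases hv.eq_wrapSet_or_eq_pairSet with ⟨y, hy, hyN, hv⟩ | ⟨hN, hv⟩
      · rw [hwx, weight_of_eq_wrapSet hy hyN hv] at h
        simp only [hv, mem_wrapSet]
        exact ⟨by omega, fun i hi hi' => by omega⟩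
      · have hx1 : x ≠ 1 := fun hx1 => hcorner ⟨hx1, hv⟩
        rw [hwx, weight_of_eq_pairSet (by omega) hv] at h
        simp only [hv, mem_pairSet]
        exact ⟨by omega, fun i hi hi' => by omega⟩
    refine ⟨_, orient_wrapVertex (i := x) (by omega : 1 ≤ x + 1) (by omega) hww
      (by rw [hwx]; omega) (hmem.2 (by omega)) (by simp only [hmem]; omega), fun i hi => ?_⟩
    rw [Finset.mem_inter] at hi
    exact mem_wrapVertex.2 (hvmem.2 i hi.1 hi.2)

lemma exists_orient_of_isWrapped_of_isWrapped (hw : IsWrapped w) (hv : IsWrapped v)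
    (h : weight w < weight v) : ∃ w', P.orient w w' ∧ w.1 ∩ v.1 ⊆ w'.1 := by
  rcases hw.eq_wrapSet_or_eq_pairSet with ⟨x, hx, hxN, hw'⟩ | ⟨hN, hw'⟩
  · exact exists_orient_of_eq_wrapSet hx hxN hw' hv h
  · have hwN := weight_of_eq_pairSet (by omega) hw'
    rcases hv.eq_wrapSet_or_eq_pairSet with ⟨y, hy, hyN, hv'⟩ | ⟨-, hv'⟩
    · rw [hwN, weight_of_eq_wrapSet hy hyN hv'] at h
      refine ⟨_, orient_wrapVertex (x := N - 2) (i := 1) (by omega) (by omega) hw (by omega) ?_ ?_,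
        fun i hi => ?_⟩
      · rw [hw', mem_pairSet]
        omega
      · simp only [hw', mem_pairSet]
        omega
      · rw [Finset.mem_inter, hw', hv', mem_pairSet, mem_wrapSet] at hi
        rw [mem_wrapVertex]
        omega
    · exact absurd (congrArg weight (Subtype.ext (hw'.trans hv'.symm))) h.ne

lemma exists_orient_of_zero_notMem (hw : IsWrapped w) (hv : 0 ∉ v.1) :
    ∃ w', P.orient w w' ∧ w.1.erase 0 ⊆ w'.1 := by
  obtain ⟨x, y, hxy, hy, hx, hsub⟩ : ∃ x y, x + 2 ≤ y ∧ y < N ∧ 0 < x ∧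
      ∀ i ∈ w.1, i ≠ 0 → i = x ∨ i = x + 1 ∨ i = y ∨ i = y + 1 := by
    have hN : 4 ≤ N := by
      have h4 : v.1.card ≤ (Finset.Icc 1 N).card := Finset.card_le_card fun i hi =>
        Finset.mem_Icc.2 ⟨Nat.pos_of_ne_zero fun h => hv (h ▸ hi), DCVert.le_of_mem hi⟩
      rwa [v.2.2.1, Nat.card_Icc, Nat.add_sub_cancel] at h4
    rcases hw.eq_wrapSet_or_eq_pairSet with ⟨a, ha, haN, hw⟩ | ⟨-, hw⟩
    · simp only [hw, mem_wrapSet]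
      by_cases haN' : a + 2 = N
      · exact ⟨a - 1, N - 1, by omega, by omega, by omega, by omega⟩
      · exact ⟨a, N - 1, by omega, by omega, by omega, by omega⟩
    · simp only [hw, mem_pairSet]
      exact ⟨1, N - 1, by omega, by omega, by omega, by omega⟩
  obtain ⟨w', hw'⟩ := exists_isPair hxy hy (Or.inl hx)
  have hsub' : w.1.erase 0 ⊆ w'.1 := fun i hi =>
    hw'.mem_iff.2 (hsub i (Finset.mem_of_mem_erase hi) (Finset.ne_of_mem_erase hi))
  exact ⟨w', orient_of_erase_subset (height_lt_of_isWrapped hw hw'.not_isWrapped) hw.1 hsub', hsub'⟩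

lemma exists_orient_of_last_notMem (hw : IsWrapped w) (hv : N ∉ v.1) :
    ∃ w', P.orient w w' ∧ w.1.erase N ⊆ w'.1 := by
  obtain ⟨x, y, hxy, hy, hsub⟩ : ∃ x y, x + 2 ≤ y ∧ y + 1 < N ∧
      ∀ i ∈ w.1, i ≠ N → i = x ∨ i = x + 1 ∨ i = y ∨ i = y + 1 := by
    have hN : 4 ≤ N := by
      have h4 : v.1.card ≤ (Finset.range N).card := Finset.card_le_card fun i hi =>
        Finset.mem_range.2 ((DCVert.le_of_mem hi).lt_of_ne fun h => hv (h ▸ hi))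
      rwa [v.2.2.1, Finset.card_range] at h4
    rcases hw.eq_wrapSet_or_eq_pairSet with ⟨a, ha, haN, hw⟩ | ⟨-, hw⟩
    · simp only [hw, mem_wrapSet]
      by_cases ha' : a = 1
      · exact ⟨0, 2, by omega, by omega, by omega⟩
      · exact ⟨0, a, by omega, by omega, by omega⟩
    · simp only [hw, mem_pairSet]
      exact ⟨0, N - 2, by omega, by omega, by omega⟩
  obtain ⟨w', hw'⟩ := exists_isPair hxy (by omega : y < N) (Or.inr hy)
  have hsub' : w.1.erase N ⊆ w'.1 := fun i hi =>
    hw'.mem_iff.2 (hsub i (Finset.mem_of_mem_erase hi) (Finset.ne_of_mem_erase hi))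
  exact ⟨w', orient_of_erase_subset (height_lt_of_isWrapped hw hw'.not_isWrapped) hw.2 hsub', hsub'⟩

lemma exists_orient_of_isWrapped (hw : IsWrapped w) (h : P.height w < P.height v) :
    ∃ w', P.orient w w' ∧ w.1 ∩ v.1 ⊆ w'.1 := by
  by_cases h0 : 0 ∈ v.1
  · by_cases hN : N ∈ v.1
    · exact exists_orient_of_isWrapped_of_isWrapped hw ⟨h0, hN⟩
        ((height_lt_iff_of_isWrapped hw ⟨h0, hN⟩).1 h)
    · obtain ⟨w', hw', hsub⟩ := exists_orient_of_last_notMem (P := P) hw hN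
      exact ⟨w', hw', (inter_subset_erase_of_notMem hN).trans hsub⟩
  · obtain ⟨w', hw', hsub⟩ := exists_orient_of_zero_notMem (P := P) hw h0
    exact ⟨w', hw', (inter_subset_erase_of_notMem h0).trans hsub⟩

/-- Hence on every face a local maximum of the height is a global one, so the sink is unique. -/
lemma exists_orient_of_height_lt (h : P.height w < P.height v) :
    ∃ w', P.orient w w' ∧ w.1 ∩ v.1 ⊆ w'.1 := by
  by_cases hw : IsWrapped w
  · exact exists_orient_of_isWrapped hw h
  have hv := not_isWrapped_of_height_le h.le hw
  obtain ⟨p, hp⟩ := P.exists_isFirst w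
  rcases (height_lt_iff_of_not_isWrapped hw hv).1 h with hstage | ⟨hstage, hscore⟩
  · rw [hp.stage_eq] at hstage
    obtain ⟨w', hw', hpw', hsub⟩ := hp.exists_leave hw hstage
    refine ⟨w', orient_of_erase_subset (height_lt_of_stage_lt hw' (hp.stage_eq ▸ hpw')) hp.1 hsub,
      fun i hi => hsub (Finset.mem_erase.2 ⟨?_, (Finset.mem_inter.1 hi).1⟩)⟩
    rintro rfl
    exact (P.stage_le_time (Finset.mem_inter.1 hi).2).not_gt hstage
  · exact hp.exists_move hw hv (hp.of_stage_eq hstage.symm) hscore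

variable {T : Finset ℕ} {t : DCVert (N + 1)}

lemma height_le_of_isFaceSink (ht : IsFaceSink P.orient T t) (hw : T ⊆ w.1) :
    P.height w ≤ P.height t := by
  by_contra! hlt
  obtain ⟨w', hw', hsub⟩ := exists_orient_of_height_lt hlt
  exact ht.2 w' ((Finset.subset_inter ht.1 hw).trans hsub) hw'

instance (n : ℕ) : Finite (DCVert n) :=
  ((Finset.range n).powerset.finite_toSet.subset fun _ h => Finset.mem_powerset.2 h.1).to_subtype

lemma existsUnique_isFaceSink (hN : Even N) (hT : ∃ v : DCVert (N + 1), T ⊆ v.1) :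
    ∃! t, IsFaceSink P.orient T t := by
  obtain ⟨t, ht, hmax⟩ := Set.exists_max_image {v : DCVert (N + 1) | T ⊆ v.1} P.height
    (Set.toFinite _) hT
  refine ⟨t, ⟨ht, fun w hw h => (hmax w hw).not_gt h.2⟩, fun s hs => ?_⟩
  exact height_injective hN (le_antisymm (hmax s hs.1) (height_le_of_isFaceSink hs ht))

lemma IsFirst.of_isFaceSink (hw : ¬IsWrapped w) (hp : P.IsFirst w p)
    (ht : IsFaceSink P.orient {p} t) :
    ¬IsWrapped t ∧ P.IsFirst t p ∧ P.score w ≤ P.score t := by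
  have hle := height_le_of_isFaceSink ht (Finset.singleton_subset_iff.2 hp.1)
  have htw := not_isWrapped_of_height_le hle hw
  have hpt : p ∈ t.1 := Finset.singleton_subset_iff.1 ht.1
  have hnot := (height_lt_iff_of_not_isWrapped htw hw).not.1 hle.not_gt
  have hstage : P.stage t = P.time p := by
    have := P.stage_le_time hpt
    have := hp.stage_eq
    omega
  have := hp.stage_eq
  exact ⟨htw, (isFirst_iff_stage_eq hpt).2 hstage, by omega⟩

end Peeling

/-! ### Runs of the algorithm -/

namespace Peeling

variable {N : ℕ} {P : Peeling N} {v w : DCVert (N + 1)} {p : ℕ}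

lemma notMem_and_erase_subset_of_orient (hp : p ∈ v.1) (hv : IsFaceSink P.orient {p} v)
    (h : P.orient v w) : p ∉ w.1 ∧ v.1.erase p ⊆ w.1 := by
  have hpw : p ∉ w.1 := fun hpw => hv.2 w (Finset.singleton_subset_iff.2 hpw) h
  obtain ⟨i, -, hsub⟩ := exists_erase_subset_of_card_inter h.1
  obtain rfl : p = i := by
    by_contra hpi
    exact hpw (hsub (Finset.mem_erase.2 ⟨hpi, hp⟩))
  exact ⟨hpw, hsub⟩

lemma IsFirst.exists_orient_ne {u u' : DCVert (N + 1)} (hv : ¬IsWrapped v) (hp : P.IsFirst v p)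
    (hu : p ∈ u.1) (hvu : P.height v < P.height u) (hu' : P.time p < P.stage u') :
    ∃ w w', P.orient v w ∧ P.orient v w' ∧ w ≠ w' := by
  obtain ⟨w, hw, hsub⟩ := exists_orient_of_height_lt hvu
  obtain ⟨w', hw', hpw', hsub'⟩ := hp.exists_leave hv hu'
  refine ⟨w, w', hw, orient_of_erase_subset
    (height_lt_of_stage_lt hw' (hp.stage_eq ▸ hpw')) hp.1 hsub', ?_⟩
  rintro rfl
  exact (P.stage_le_time (hsub (Finset.mem_inter.2 ⟨hp.1, hu⟩))).not_gt hpw'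

lemma exists_orient_to_of_isWrapped (hw : IsWrapped w) (hne : w.1 ≠ wrapSet N 1) :
    ∃ v, P.orient v w := by
  rcases hw.eq_wrapSet_or_eq_pairSet with ⟨x, hx, hxN, hw'⟩ | ⟨hN, hw'⟩
  · have hx1 : x ≠ 1 := fun h => hne (h ▸ hw')
    refine ⟨wrapVertex (x - 1) (by omega) (by omega),
      orient_of_erase_subset (i := x - 1) ?_ (mem_wrapVertex.2 (by omega)) fun i hi => ?_⟩
    · rw [height_lt_iff_of_isWrapped (isWrapped_of_eq_wrapSet rfl) hw,
        weight_of_eq_wrapSet (by omega) (by omega) rfl, weight_of_eq_wrapSet hx hxN hw']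
      omega
    · rw [Finset.mem_erase, mem_wrapVertex] at hi
      rw [hw', mem_wrapSet]
      omega
  · have hN3 : N ≠ 3 := by
      rintro rfl
      exact hne hw'
    refine ⟨wrapVertex 1 le_rfl (by omega),
      orient_of_erase_subset (i := 2) ?_ (mem_wrapVertex.2 (by omega)) fun i hi => ?_⟩
    · rw [height_lt_iff_of_isWrapped (isWrapped_of_eq_wrapSet rfl) hw,
        weight_of_eq_wrapSet le_rfl (by omega) rfl, weight_of_eq_pairSet (by omega) hw']
      omega
    · rw [Finset.mem_erase, mem_wrapVertex] at hi
      rw [hw', mem_pairSet]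
      omega

lemma IsFirst.height_lt_of_time_lt {i : ℕ} (hw : ¬IsWrapped w) (hp : P.IsFirst w p) (hi : i ∈ v.1)
    (h : P.time i < P.time p) : P.height v < P.height w :=
  height_lt_of_stage_lt hw (hp.stage_eq ▸ (P.stage_le_time hi).trans_lt h)

lemma exists_orient_to_left {x y : ℕ} (hw : IsPair w x y) (hp : P.IsFirst w x) :
    ∃ v, P.orient v w := by
  have hgap := hw.gap
  have hlt := hw.lt
  have hcorner := hw.unwrapped
  by_cases hx : x = 0
  · refine ⟨wrapVertex y (by omega) (by omega), orient_of_erase_subset (i := N)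
      (height_lt_of_isWrapped (isWrapped_of_eq_wrapSet rfl) hw.not_isWrapped)
      (mem_wrapVertex.2 (by omega)) fun i hi => ?_⟩
    rw [Finset.mem_erase, mem_wrapVertex] at hi
    rw [hw.mem_iff]
    omega
  · have hearlier : P.time (x - 1) < P.time x := by
      have := hp.time_lt (hw.mem_iff.2 (by omega) : y + 1 ∈ w.1) (by omega)
      have := P.unimodal (by omega : x - 1 ≤ x) (by omega : x ≤ y + 1) (by omega)
      have := P.time_ne (by omega : x - 1 ≤ N) (by omega : x ≤ N) (by omega)
      omega
    have hmem : x - 1 ∈ (pairVertex (x - 1) y (by omega) hlt).1 := mem_pairVertex.2 (by omega)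
    refine ⟨_, orient_of_erase_subset (hp.height_lt_of_time_lt hw.not_isWrapped hmem hearlier)
      hmem fun i hi => ?_⟩
    rw [Finset.mem_erase, mem_pairVertex] at hi
    rw [hw.mem_iff]
    omega

lemma exists_orient_to_right {x y : ℕ} (hw : IsPair w x y) (hp : P.IsFirst w (y + 1)) :
    ∃ v, P.orient v w := by
  have hgap := hw.gap
  have hlt := hw.lt
  have hcorner := hw.unwrapped
  by_cases hy : y + 1 = N
  · refine ⟨wrapVertex x (by omega) (by omega), orient_of_erase_subset (i := 0)
      (height_lt_of_isWrapped (isWrapped_of_eq_wrapSet rfl) hw.not_isWrapped)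
      (mem_wrapVertex.2 (by omega)) fun i hi => ?_⟩
    rw [Finset.mem_erase, mem_wrapVertex] at hi
    rw [hw.mem_iff]
    omega
  · have hearlier : P.time (y + 2) < P.time (y + 1) := by
      have := hp.time_lt (hw.mem_iff.2 (by omega) : x ∈ w.1) (by omega)
      have := P.unimodal (by omega : x ≤ y + 1) (by omega : y + 1 ≤ y + 2) (by omega)
      have := P.time_ne (by omega : y + 1 ≤ N) (by omega : y + 2 ≤ N) (by omega)
      omega
    have hmem : y + 2 ∈ (pairVertex x (y + 1) (by omega) (by omega : y + 1 < N)).1 :=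
      mem_pairVertex.2 (by omega)
    refine ⟨_, orient_of_erase_subset (hp.height_lt_of_time_lt hw.not_isWrapped hmem hearlier)
      hmem fun i hi => ?_⟩
    rw [Finset.mem_erase, mem_pairVertex] at hi
    rw [hw.mem_iff]
    omega

lemma exists_orient_to_of_ne_wrapSet (hne : w.1 ≠ wrapSet N 1) : ∃ v, P.orient v w := by
  by_cases hw : IsWrapped w
  · exact exists_orient_to_of_isWrapped hw hne
  · obtain ⟨p, hp⟩ := P.exists_isFirst w
    obtain ⟨x, y, hw⟩ := exists_isPair_of_not_isWrapped hw
    rcases hp.eq_or_eq hw with ⟨rfl, -⟩ | ⟨rfl, -⟩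
    · exact exists_orient_to_left hw hp
    · exact exists_orient_to_right hw hp

end Peeling

namespace RFRun

variable {n : ℕ} {D : DCVert n → DCVert n → Prop} {T : Finset ℕ} {v s : DCVert n}
  {l : List (DCVert n)}

lemma isFaceSink (h : RFRun n D T v s l) : IsFaceSink D T s := by
  induction h with
  | sink T v hv h => exact ⟨hv, h⟩
  | follow _ _ _ _ _ _ _ _ _ _ ih => exact ih
  | facet _ _ _ _ _ _ _ _ _ _ _ _ _ _ _ ih => exact ih

lemma length_pos (h : RFRun n D T v s l) : 0 < l.length := by
  induction h with
  | sink => simp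
  | follow => simp
  | facet _ _ _ _ _ _ _ _ _ _ _ _ _ _ ih _ =>
    rw [List.length_append]
    omega

lemma abs_sub_le_mul_length {f : DCVert n → ℤ} {C : ℤ} {p : DCVert n → Prop}
    (hp : ∀ ⦃v w⦄, D v w → p v → p w) (hf : ∀ ⦃v w⦄, D v w → p v → |f w - f v| ≤ C)
    (h : RFRun n D T v s l) (hv : p v) : p s ∧ |f s - f v| ≤ C * (l.length - 1) := by
  induction h with
  | sink => simpa using hv
  | follow _ v w s l _ hvw _ _ _ ih =>
    obtain ⟨hs, hws⟩ := ih (hp hvw hv)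
    refine ⟨hs, (abs_sub_le (f s) (f w) (f v)).trans ?_⟩
    have := hf hvw hv
    rw [List.length_cons]
    push_cast
    linarith
  | facet _ v u s l₁ l₂ _ _ _ _ _ _ _ h₂ ih₁ ih₂ =>
    obtain ⟨hu, hvu⟩ := ih₁ hv
    obtain ⟨hs, hus⟩ := ih₂ hu
    refine ⟨hs, (abs_sub_le (f s) (f u) (f v)).trans ?_⟩
    rw [List.length_append, List.length_tail, Nat.cast_add, Nat.cast_sub h₂.length_pos]
    push_cast
    linarith

end RFRun

/-- Every run of the algorithm in the whole polytope that starts at `v` has at least `m / 2`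
vertices. -/
def Forces {n : ℕ} (D : DCVert n → DCVert n → Prop) (v : DCVert n) (m : ℕ) : Prop :=
  ∀ s l, RFRun n D ∅ v s l → m ≤ 2 * l.length

namespace Forces

variable {n : ℕ} {D : DCVert n → DCVert n → Prop} {v w : DCVert n} {m : ℕ}

lemma of_unique_orient (hvw : D v w) (huniq : ∀ w', D v w' → w' = w) (h : Forces D w m) :
    Forces D v m := by
  intro s l hrun
  cases hrun with
  | sink _ _ _ hsink => exact absurd hvw (hsink w (Finset.empty_subset _))
  | follow _ _ w' _ l' _ hvw' _ _ hl' =>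
    obtain rfl := huniq w' hvw'
    have := h s l' hl'
    rw [List.length_cons]
    omega
  | facet _ _ _ _ _ _ _ _ _ _ _ hmulti =>
    exact absurd ⟨w, ⟨Finset.empty_subset _, hvw⟩, fun w' hw' => huniq w' hw'.2⟩ hmulti

lemma of_facets (hne : ∃ w w', D v w ∧ D v w' ∧ w ≠ w')
    (h : ∀ i ∈ v.1, ∀ u l₁, RFRun n D {i} v u l₁ →
      ∃ m', Forces D u m' ∧ m ≤ 2 * (l₁.length - 1) + m') : Forces D v m := by
  obtain ⟨w, w', hw, hw', hww'⟩ := hne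
  intro s l hrun
  cases hrun with
  | sink _ _ _ hsink => exact absurd hw (hsink w (Finset.empty_subset _))
  | follow _ _ _ _ _ _ _ _ huniq =>
    exact absurd ((huniq w (Finset.empty_subset _) hw).trans
      (huniq w' (Finset.empty_subset _) hw').symm) hww'
  | facet _ _ u _ l₁ l₂ i _ hi _ _ _ h₁ h₂ =>
    obtain ⟨m', hm', hle⟩ := h i hi u l₁ (by simpa using h₁)
    have := hm' s l₂ h₂
    have := h₂.length_pos
    have := h₁.length_pos
    rw [List.length_append, List.length_tail]
    omega

end Forces

/-! ### Blocks -/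

/-- The schedule of the construction, which alternately removes six facets from the left end and
six from the right end; each such round of six is a block. -/
def blockPeeling (k : ℕ) : Peeling (12 * k) where
  time i := if i < 6 * k then 12 * (i / 6) + i % 6
    else 12 * ((12 * k - i) / 6) + 6 + (12 * k - i) % 6
  ascending := {t | 2 ≤ t % 12 ∧ t % 12 < 8}
  time_injOn := by
    intro i hi j hj h
    rw [Set.mem_Iic] at hi hj
    dsimp only at h
    split_ifs at h <;> omega
  unimodal := by
    intro x y z hxy hyz hz
    split_ifs <;> omega

/-- The facets that are present at the beginning of block `b`, numbered from `0` to `12 k - 6 b`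
starting from the end at which the block removes facets. -/
def facet (k b s : ℕ) : ℕ := if b % 2 = 0 then 3 * b + s else 12 * k + 3 - 3 * b - s

lemma facet_succ {k b s : ℕ} (hs : s ≤ 12 * k - 6 * b) (hb : b ≤ k) :
    facet k (b + 1) s = facet k b (12 * k - 6 * b - s) := by
  unfold facet
  split_ifs <;> omega

lemma blockPeeling_time_facet {k b r : ℕ} (hk : 2 ≤ k) (hb : b ≤ k) (hr : r < 6) :
    (blockPeeling k).time (facet k b r) = 6 * b + r := by
  simp only [blockPeeling, facet]
  split_ifs <;> omega

lemma blockPeeling_time_facet_mem_ascending {k b r : ℕ} (hk : 2 ≤ k) (hb : b ≤ k) (hr : r < 6) :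
    (blockPeeling k).time (facet k b r) ∈ (blockPeeling k).ascending ↔ (b % 2 = 0 ↔ 2 ≤ r) := by
  rw [blockPeeling_time_facet hk hb hr]
  change 2 ≤ (6 * b + r) % 12 ∧ (6 * b + r) % 12 < 8 ↔ _
  omega

/-- The vertex `v` consists of the pairs of facets numbered `r, r + 1` and `m, m + 1` in the
numbering of block `b`. -/
structure IsSlot (k b r m : ℕ) (v : DCVert (12 * k + 1)) : Prop where
  gap : r + 2 ≤ m
  lt : m < 12 * k - 6 * b
  isPair : b % 2 = 0 ∧ IsPair v (3 * b + r) (3 * b + m) ∨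
    b % 2 = 1 ∧ IsPair v (12 * k + 2 - 3 * b - m) (12 * k + 2 - 3 * b - r)

/-- The vertex `v` consists of the pair numbered `r` in block `b` and the lowest possible pair. -/
abbrev IsNear (k b r : ℕ) (v : DCVert (12 * k + 1)) : Prop := IsSlot k b r (r + 2) v

/-- The vertex `v` consists of the pair numbered `r` in block `b` and the highest possible pair. -/
abbrev IsFar (k b r : ℕ) (v : DCVert (12 * k + 1)) : Prop := IsSlot k b r (12 * k - 6 * b - 1) v

lemma exists_isSlot {k b r m : ℕ} (hrm : r + 2 ≤ m) (hm : m < 12 * k - 6 * b)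
    (h : 0 < b ∨ 0 < r ∨ m + 1 < 12 * k) : ∃ v, IsSlot k b r m v := by
  rcases Nat.mod_two_eq_zero_or_one b with hb | hb
  · obtain ⟨v, hv⟩ := exists_isPair (x := 3 * b + r) (y := 3 * b + m) (N := 12 * k)
      (by omega) (by omega) (by omega)
    exact ⟨v, hrm, hm, Or.inl ⟨hb, hv⟩⟩
  · obtain ⟨v, hv⟩ := exists_isPair (x := 12 * k + 2 - 3 * b - m) (y := 12 * k + 2 - 3 * b - r)
      (N := 12 * k) (by omega) (by omega) (by omega)
    exact ⟨v, hrm, hm, Or.inr ⟨hb, hv⟩⟩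

section Block

variable {k b r m : ℕ} {v w : DCVert (12 * k + 1)}

lemma exists_isSlot_of_isFirst (hk : 2 ≤ k) (hb : b ≤ k) (hr : r < 6) (hv : ¬IsWrapped v)
    (hp : (blockPeeling k).IsFirst v (facet k b r)) : ∃ m, IsSlot k b r m v := by
  obtain ⟨x, y, hv⟩ := exists_isPair_of_not_isWrapped hv
  have hgap := hv.gap
  have hlt := hv.lt
  have htime := blockPeeling_time_facet hk hb hr
  rcases hp.eq_or_eq hv with ⟨h, hxy⟩ | ⟨h, hxy⟩ <;> rw [← h, htime] at hxy <;>
    simp only [blockPeeling] at hxy <;> unfold facet at h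
  · have hb' : b % 2 = 0 := by
      split_ifs at h hxy <;> omega
    rw [if_pos hb'] at h
    have hy : y = 3 * b + (y - 3 * b) := by omega
    rw [← h, hy] at hv
    exact ⟨y - 3 * b, by omega, by split_ifs at hxy <;> omega, Or.inl ⟨hb', hv⟩⟩
  · have hb' : b % 2 = 1 := by
      split_ifs at h hxy <;> omega
    rw [if_neg (by omega)] at h
    have hx : x = 12 * k + 2 - 3 * b - (12 * k + 2 - 3 * b - x) := by omega
    have hy : y = 12 * k + 2 - 3 * b - r := by omega
    rw [hx, hy] at hv
    exact ⟨12 * k + 2 - 3 * b - x, by omega, by split_ifs at hxy <;> omega, Or.inr ⟨hb', hv⟩⟩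

namespace IsSlot

lemma not_isWrapped (h : IsSlot k b r m v) : ¬IsWrapped v := by
  rcases h.isPair with ⟨-, h⟩ | ⟨-, h⟩ <;> exact h.not_isWrapped

lemma mem_iff (h : IsSlot k b r m v) {i : ℕ} :
    i ∈ v.1 ↔ i = facet k b r ∨ i = facet k b (r + 1) ∨ i = facet k b m ∨
      i = facet k b (m + 1) := by
  have := h.gap
  have := h.lt
  unfold facet
  rcases h.isPair with ⟨hb, h⟩ | ⟨hb, h⟩ <;> rw [h.mem_iff] <;> split_ifs <;> omega

lemma eq (hv : IsSlot k b r m v) (hw : IsSlot k b r m w) : v = w := by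
  ext i
  rw [hv.mem_iff, hw.mem_iff]

lemma isFirst (hk : 2 ≤ k) (hb : b ≤ k) (hr : r < 6) (h : IsSlot k b r m v) :
    (blockPeeling k).IsFirst v (facet k b r) := by
  have hgap := h.gap
  have hlt := h.lt
  rcases h.isPair with ⟨hb', h⟩ | ⟨hb', h⟩
  · have hfacet : facet k b r = 3 * b + r := if_pos hb'
    rw [hfacet]
    refine Peeling.isFirst_left h ?_
    rw [← hfacet, blockPeeling_time_facet hk hb hr]
    simp only [blockPeeling]
    split_ifs <;> omega
  · have hfacet : facet k b r = 12 * k + 2 - 3 * b - r + 1 := by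
      rw [facet, if_neg (by omega)]
      omega
    rw [hfacet]
    refine Peeling.isFirst_right h ?_
    rw [← hfacet, blockPeeling_time_facet hk hb hr]
    simp only [blockPeeling]
    split_ifs <;> omega

lemma weight_eq (h : IsSlot k b r m v) :
    weight v = if b % 2 = 0 then (12 * b + 2 * r + 2 * m + 2 : ℤ)
      else 48 * k + 10 - 12 * b - 2 * r - 2 * m := by
  have := h.gap
  have := h.lt
  rcases h.isPair with ⟨hb, h⟩ | ⟨hb, h⟩ <;> rw [h.weight_eq] <;> split_ifs <;> omega

lemma score_le_iff {m' : ℕ} (hk : 2 ≤ k) (hb : b ≤ k) (hr : r < 6) (hv : IsSlot k b r m v)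
    (hw : IsSlot k b r m' w) :
    (blockPeeling k).score v ≤ (blockPeeling k).score w ↔ if 2 ≤ r then m ≤ m' else m' ≤ m := by
  rw [← not_lt, (hw.isFirst hk hb hr).score_lt_iff (hv.isFirst hk hb hr),
    blockPeeling_time_facet_mem_ascending hk hb hr, hv.weight_eq, hw.weight_eq]
  split_ifs <;> omega

lemma of_erase_subset (hk : 2 ≤ k) (hb : b ≤ k) (hr : r < 6) (hv : IsSlot k b r m v)
    (hw : ¬IsWrapped w) (hp : facet k b r ∉ w.1) (hsub : v.1.erase (facet k b r) ⊆ w.1) :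
    IsSlot k b (r + 1) (max m (r + 3)) w := by
  obtain ⟨x, y, hw⟩ := exists_isPair_of_not_isWrapped hw
  have hgap := hv.gap
  have hlt := hv.lt
  have hxy := hw.gap
  have mem : ∀ s, s ≠ r → (s = r + 1 ∨ s = m ∨ s = m + 1) → facet k b s ∈ w.1 := by
    intro s hsr hs
    refine hsub (Finset.mem_erase.2 ⟨?_, hv.mem_iff.2 ?_⟩)
    · unfold facet
      split_ifs <;> omega
    · rcases hs with rfl | rfl | rfl <;> simp only [true_or, or_true]
  have h1 := mem (r + 1) (by omega) (by omega)
  have h2 := mem m (by omega) (by omega)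
  have h3 := mem (m + 1) (by omega) (by omega)
  rw [hw.mem_iff] at hp h1 h2 h3
  unfold facet at hp h1 h2 h3
  refine ⟨by omega, by omega, ?_⟩
  rcases hv.isPair with ⟨hb', -⟩ | ⟨hb', -⟩
  · simp only [if_pos hb'] at hp h1 h2 h3
    obtain ⟨rfl, rfl⟩ : x = 3 * b + (r + 1) ∧ y = 3 * b + max m (r + 3) := by omega
    exact Or.inl ⟨hb', hw⟩
  · have : b % 2 ≠ 0 := by omega
    simp only [if_neg this] at hp h1 h2 h3
    obtain ⟨rfl, rfl⟩ : x = 12 * k + 2 - 3 * b - max m (r + 3) ∧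
        y = 12 * k + 2 - 3 * b - (r + 1) := by omega
    exact Or.inr ⟨hb', hw⟩

lemma isFar_succ_block (hv : IsFar k b 6 v) : IsFar k (b + 1) 0 v := by
  have := hv.gap
  refine ⟨by omega, by omega, ?_⟩
  rcases hv.isPair with ⟨hb, hv⟩ | ⟨hb, hv⟩
  · refine Or.inr ⟨by omega, ?_⟩
    convert hv using 1 <;> omega
  · refine Or.inl ⟨by omega, ?_⟩
    convert hv using 1 <;> omega

end IsSlot

end Block

/-! ### The lower bound -/

/-- The number of the second pair in the sink of the facet numbered `r < 6` in block `b`: as low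
as possible for the first two facets of a block and as high as possible for the other four. -/
def sinkSlot (k b r : ℕ) : ℕ := if 2 ≤ r then 12 * k - 6 * b - 1 else r + 2

namespace IsSlot

variable {k b r m : ℕ} {v w : DCVert (12 * k + 1)}

lemma of_isFaceSink (hk : 2 ≤ k) (hb : b ≤ k) (hr : r < 6)
    (hv : IsFaceSink (blockPeeling k).orient {facet k b r} v) :
    IsSlot k b r (sinkSlot k b r) v := by
  obtain ⟨w, hw⟩ := exists_isSlot (k := k) (b := b) (r := r) (m := sinkSlot k b r)
    (by unfold sinkSlot; split_ifs <;> omega) (by unfold sinkSlot; split_ifs <;> omega)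
    (by unfold sinkSlot; split_ifs <;> omega)
  obtain ⟨hvw, hfirst, hle⟩ := (hw.isFirst hk hb hr).of_isFaceSink hw.not_isWrapped hv
  obtain ⟨m, hm⟩ := exists_isSlot_of_isFirst hk hb hr hvw hfirst
  have hgap := hm.gap
  have hlt := hm.lt
  rw [hw.score_le_iff hk hb hr hm] at hle
  obtain rfl : m = sinkSlot k b r := by
    unfold sinkSlot at hle ⊢
    split_ifs at hle ⊢ <;> omega
  exact hm

lemma isFaceSink (hk : 2 ≤ k) (hb : b ≤ k) (hr : r < 6) (hv : IsSlot k b r (sinkSlot k b r) v) :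
    IsFaceSink (blockPeeling k).orient {facet k b r} v := by
  have hmem : facet k b r ∈ v.1 := hv.mem_iff.2 (Or.inl rfl)
  obtain ⟨t, ht, -⟩ := (blockPeeling k).existsUnique_isFaceSink (T := {facet k b r})
    (⟨6 * k, by ring⟩) ⟨v, Finset.singleton_subset_iff.2 hmem⟩
  exact hv.eq (of_isFaceSink hk hb hr ht) ▸ ht

lemma of_orient (hk : 2 ≤ k) (hb : b ≤ k) (hr : r < 6) (hv : IsSlot k b r (sinkSlot k b r) v)
    (hvw : (blockPeeling k).orient v w) :
    IsSlot k b (r + 1) (max (sinkSlot k b r) (r + 3)) w := by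
  obtain ⟨hp, hsub⟩ := Peeling.notMem_and_erase_subset_of_orient (hv.mem_iff.2 (Or.inl rfl))
    (hv.isFaceSink hk hb hr) hvw
  exact hv.of_erase_subset hk hb hr
    ((blockPeeling k).not_isWrapped_of_orient hvw hv.not_isWrapped) hp hsub

lemma stage_eq (hk : 2 ≤ k) (hb : b ≤ k) (hr : r < 6) (hv : IsSlot k b r m v) :
    (blockPeeling k).stage v = 6 * b + r := by
  rw [(hv.isFirst hk hb hr).stage_eq, blockPeeling_time_facet hk hb hr]

end IsSlot

lemma blockPeeling_exists_lt_stage {k b r : ℕ} (hk : 2 ≤ k) (hb : b + 1 ≤ k) (hr : r < 6) :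
    ∃ u, 6 * b + r < (blockPeeling k).stage u ∧ ¬IsWrapped u := by
  obtain ⟨u, hu⟩ := exists_isSlot (k := k) (b := b + 1) (r := 0) (m := 2) (by omega) (by omega)
    (by omega)
  refine ⟨u, ?_, hu.not_isWrapped⟩
  rw [hu.stage_eq hk hb (by omega)]
  omega

namespace IsSlot

variable {k b r m : ℕ} {v w : DCVert (12 * k + 1)}

lemma exists_orient (hk : 2 ≤ k) (hb : b + 1 ≤ k) (hr : r < 6) (hv : IsSlot k b r m v) :
    ∃ w, (blockPeeling k).orient v w := by
  obtain ⟨u, hu, hwrap⟩ := blockPeeling_exists_lt_stage hk hb hr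
  obtain ⟨w, hw, -⟩ := Peeling.exists_orient_of_height_lt
    (Peeling.height_lt_of_stage_lt hwrap ((hv.stage_eq hk (by omega) hr).trans_lt hu))
  exact ⟨w, hw⟩

lemma exists_orient_ne {m' : ℕ} (hk : 2 ≤ k) (hb : b + 1 ≤ k) (hr : r < 6)
    (hv : IsSlot k b r m v) (hw : IsSlot k b r m' w) (h : if 2 ≤ r then m < m' else m' < m) :
    ∃ w w', (blockPeeling k).orient v w ∧ (blockPeeling k).orient v w' ∧ w ≠ w' := by
  obtain ⟨u, hu, -⟩ := blockPeeling_exists_lt_stage hk hb hr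
  have hvp := hv.isFirst hk (by omega) hr
  have hwp := hw.isFirst hk (by omega) hr
  have hscore : (blockPeeling k).score v < (blockPeeling k).score w := by
    rw [← not_le, hw.score_le_iff hk (by omega) hr hv]
    split_ifs at h ⊢ <;> omega
  refine hvp.exists_orient_ne hv.not_isWrapped hwp.1
    (hvp.height_lt hv.not_isWrapped hw.not_isWrapped hwp hscore) (u' := u) ?_
  rwa [blockPeeling_time_facet hk (by omega) hr]

end IsSlot

namespace Forces

lemma mono {n m m' : ℕ} {D : DCVert n → DCVert n → Prop} {v : DCVert n} (h : Forces D v m)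
    (hm : m' ≤ m) : Forces D v m' :=
  fun s l hrun => hm.trans (h s l hrun)

lemma zero {n : ℕ} (D : DCVert n → DCVert n → Prop) (v : DCVert n) : Forces D v 0 :=
  fun _ _ _ => Nat.zero_le _

variable {k b r m : ℕ} {v w : DCVert (12 * k + 1)}

lemma of_sinkSlot (hk : 2 ≤ k) (hb : b + 1 ≤ k) (hr : r < 6) (hv : IsSlot k b r (sinkSlot k b r) v)
    (h : ∀ w, IsSlot k b (r + 1) (max (sinkSlot k b r) (r + 3)) w →
      Forces (blockPeeling k).orient w m) : Forces (blockPeeling k).orient v m := by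
  obtain ⟨w, hw⟩ := hv.exists_orient hk hb hr
  have hslot := fun u hu => hv.of_orient hk (by omega) hr (w := u) hu
  exact of_unique_orient hw (fun u hu => (hslot u hu).eq (hslot w hw)) (h w (hslot w hw))

lemma of_isFar (hk : 2 ≤ k) (hb : b + 1 ≤ k) (h2r : 2 ≤ r) (hr : r ≤ 6)
    (hv : IsFar k b r v)
    (h : ∀ w, IsFar k (b + 1) 0 w →
      Forces (blockPeeling k).orient w m) : Forces (blockPeeling k).orient v m := by
  induction hr using Nat.decreasingInduction generalizing v with
  | self => exact h v hv.isFar_succ_block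
  | of_succ r hr ih =>
    have hsink : sinkSlot k b r = 12 * k - 6 * b - 1 := if_pos h2r
    refine of_sinkSlot hk hb hr (by rwa [hsink]) fun w hw => ih (by omega) ?_
    rwa [hsink, max_eq_left (by omega)] at hw

lemma of_isNear (hk : 2 ≤ k) (hb : b + 1 ≤ k) (hr : r ≤ 2) (hv : IsNear k b r v)
    (h : ∀ w, IsFar k (b + 1) 0 w →
      Forces (blockPeeling k).orient w m) : Forces (blockPeeling k).orient v m := by
  induction hr using Nat.decreasingInduction generalizing v with
  | self =>
    obtain ⟨w, hw⟩ := exists_isSlot (k := k) (b := b) (r := 2) (m := 12 * k - 6 * b - 1)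
      (by omega) (by omega) (by omega)
    refine of_facets (hv.exists_orient_ne hk hb (by omega) hw (by rw [if_pos le_rfl]; omega))
      fun i hi u l₁ hrun => ⟨m, ?_, by omega⟩
    obtain ⟨s, h2s, hs, rfl⟩ : ∃ s, 2 ≤ s ∧ s < 6 ∧ i = facet k b s := by
      rcases hv.mem_iff.1 hi with rfl | rfl | rfl | rfl <;>
        exact ⟨_, by omega, by omega, rfl⟩
    have hu := IsSlot.of_isFaceSink hk (by omega) hs hrun.isFaceSink
    rw [sinkSlot, if_pos h2s] at hu
    exact of_isFar hk hb h2s hs.le hu h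
  | of_succ r hr ih =>
    have hsink : sinkSlot k b r = r + 2 := if_neg (by omega)
    refine of_sinkSlot (r := r) hk hb (by omega) (by rwa [hsink]) fun w hw => ih ?_
    rwa [hsink, max_eq_right (by omega)] at hw

end Forces

lemma Peeling.abs_weight_sub_le_mul_length {N : ℕ} {P : Peeling N} {T : Finset ℕ}
    {v s : DCVert (N + 1)} {l : List (DCVert (N + 1))} (hv : ¬IsWrapped v)
    (h : RFRun (N + 1) P.orient T v s l) : |weight s - weight v| ≤ 4 * (l.length - 1) :=
  (h.abs_sub_le_mul_length (p := fun v => ¬IsWrapped v)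
    (fun _ _ hvw => P.not_isWrapped_of_orient hvw)
    (fun _ _ hvw hv => abs_weight_sub_le hv (P.not_isWrapped_of_orient hvw hv) hvw.1) hv).2

section Entry

variable {k b c r m : ℕ} {v u : DCVert (12 * k + 1)} {T : Finset ℕ}
  {l : List (DCVert (12 * k + 1))}

lemma three_mul_le_length_of_isFar_of_isNear (hc : c = b ∨ c = b + 1) (hck : b + 1 ≤ k) (hr : r < 2)
    (hv : IsFar k b 0 v) (hu : IsNear k c r u)
    (h : RFRun (12 * k + 1) (blockPeeling k).orient T v u l) : 3 * k ≤ l.length - 1 := by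
  have hle := Peeling.abs_weight_sub_le_mul_length hv.not_isWrapped h
  rw [hv.weight_eq, hu.weight_eq, abs_le] at hle
  rcases hc with rfl | rfl <;> split_ifs at hle <;> omega

lemma isNear_of_isFaceSink (hk : 2 ≤ k) (hb : b ≤ k) (hr : r < 2)
    (hv : IsFaceSink (blockPeeling k).orient {facet k b r} v) : IsNear k b r v := by
  have := IsSlot.of_isFaceSink hk hb (by omega) hv
  rwa [sinkSlot, if_neg (by omega)] at this

lemma Forces.of_isFar_zero (hk : 2 ≤ k) (hb₀ : 1 ≤ b) (hb : b + 1 ≤ k)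
    (hv : IsFar k b 0 v)
    (h : ∀ c r u, c = b ∨ c = b + 1 → r < 2 → IsNear k c r u →
      Forces (blockPeeling k).orient u m) : Forces (blockPeeling k).orient v (6 * k + m) := by
  obtain ⟨w, hw⟩ := exists_isSlot (k := k) (b := b) (r := 0) (m := 2) (by omega) (by omega)
    (by omega)
  refine of_facets (hv.exists_orient_ne hk hb (by omega) hw (by rw [if_neg (by omega)]; omega))
    fun i hi u l₁ hrun => ?_
  obtain ⟨c, r, hc, hr, rfl⟩ : ∃ c r, (c = b ∨ c = b + 1) ∧ r < 2 ∧ i = facet k c r := by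
    rcases hv.mem_iff.1 hi with rfl | rfl | rfl | rfl
    · exact ⟨b, 0, Or.inl rfl, by omega, rfl⟩
    · exact ⟨b, 1, Or.inl rfl, by omega, rfl⟩
    · exact ⟨b + 1, 1, Or.inr rfl, by omega, (facet_succ (by omega) (by omega)).symm⟩
    · refine ⟨b + 1, 0, Or.inr rfl, by omega, ?_⟩
      rw [facet_succ (by omega) (by omega)]
      congr 1
      omega
  have hu := isNear_of_isFaceSink hk (by omega) hr hrun.isFaceSink
  have := three_mul_le_length_of_isFar_of_isNear hc hb hr hv hu hrun
  exact ⟨m, h c r u hc hr hu, by omega⟩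

lemma forces_of_isFar_zero (hk : 2 ≤ k) (hb : 1 ≤ b) (hv : IsFar k b 0 v) :
    Forces (blockPeeling k).orient v ((k - b) * (3 * k)) := by
  induction h : k - b using Nat.strong_induction_on generalizing b v with
  | _ d ih =>
    subst h
    rcases Nat.lt_or_ge b k with hbk | hbk
    · have hstep : (k - b) * (3 * k) ≤ 6 * k + (k - (b + 2)) * (3 * k) := by
        have : k - b ≤ (k - (b + 2)) + 2 := by omega
        nlinarith
      refine (Forces.of_isFar_zero hk hb hbk hv fun c r u hc hr hu => ?_).mono hstep
      rcases Nat.lt_or_ge c k with hck | hck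
      · refine Forces.of_isNear hk hck hr.le hu fun w hw => ?_
        exact (ih _ (by omega) (by omega) hw rfl).mono (Nat.mul_le_mul_right _ (by omega))
      · rw [Nat.sub_eq_zero_of_le (by omega : k ≤ b + 2), zero_mul]
        exact Forces.zero _ _
    · rw [Nat.sub_eq_zero_of_le hbk, zero_mul]
      exact Forces.zero _ _

end Entry

lemma sq_le_length_bound {k len : ℕ} (hk : 1 ≤ k) (hlen : 0 < len)
    (h : (k - 2) * (3 * k) ≤ 2 * len) : 1 / 676 * ((12 * k + 1 : ℕ) : ℝ) ^ 2 ≤ len := by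
  have hn : 12 * k + 1 ≤ 13 * k := by omega
  have hsq : k ^ 2 ≤ 4 * len := by
    rcases Nat.lt_or_ge k 3 with hk3 | hk3
    · have := Nat.pow_le_pow_left (Nat.le_of_lt_succ hk3) 2
      omega
    · have : k ≤ 6 * (k - 2) := by omega
      nlinarith
  have hn' : ((12 * k + 1 : ℕ) : ℝ) ≤ 13 * k := mod_cast hn
  have hsq' : (k : ℝ) ^ 2 ≤ 4 * len := mod_cast hsq
  calc (1 / 676 * ((12 * k + 1 : ℕ) : ℝ) ^ 2 : ℝ) ≤ 1 / 676 * (13 * k) ^ 2 := by gcongr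
    _ = (k : ℝ) ^ 2 / 4 := by ring
    _ ≤ len := by linarith

lemma Peeling.exists_orient_ne_of_eq_wrapSet {N : ℕ} (hN : 5 ≤ N) {P : Peeling N}
    {v : DCVert (N + 1)} (hv : v.1 = wrapSet N 1) :
    ∃ w w', P.orient v w ∧ P.orient v w' ∧ w ≠ w' := by
  have hwrap := isWrapped_of_eq_wrapSet hv
  obtain ⟨w, hw⟩ := exists_isPair (x := 0) (y := 2) (N := N) (by omega) (by omega) (by omega)
  obtain ⟨w', hw'⟩ := exists_isPair (x := 1) (y := N - 1) (N := N) (by omega) (by omega) (by omega)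
  have hsub : v.1.erase N ⊆ w.1 := by
    intro i hi
    rw [Finset.mem_erase, hv, mem_wrapSet] at hi
    rw [hw.mem_iff]
    omega
  have hsub' : v.1.erase 0 ⊆ w'.1 := by
    intro i hi
    rw [Finset.mem_erase, hv, mem_wrapSet] at hi
    rw [hw'.mem_iff]
    omega
  refine ⟨w, w',
    orient_of_erase_subset (height_lt_of_isWrapped hwrap hw.not_isWrapped) hwrap.2 hsub,
    orient_of_erase_subset (height_lt_of_isWrapped hwrap hw'.not_isWrapped) hwrap.1 hsub', ?_⟩
  rintro rfl
  have : 0 ∈ w.1 := hw.mem_iff.2 (Or.inl rfl)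
  rw [hw'.mem_iff] at this
  omega

lemma forces_of_source {k : ℕ} {v : DCVert (12 * k + 1)}
    (hv : ∀ w, ¬(blockPeeling k).orient w v) :
    Forces (blockPeeling k).orient v ((k - 2) * (3 * k)) := by
  rcases Nat.lt_or_ge k 2 with hk | hk
  · rw [Nat.sub_eq_zero_of_le hk.le, zero_mul]
    exact Forces.zero _ _
  have hv : v.1 = wrapSet (12 * k) 1 := by
    by_contra hne
    obtain ⟨w, hw⟩ := Peeling.exists_orient_to_of_ne_wrapSet hne
    exact hv w hw
  refine Forces.of_facets (Peeling.exists_orient_ne_of_eq_wrapSet (by omega) hv)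
    fun i hi u l₁ hrun => ⟨_, ?_, Nat.le_add_left _ _⟩
  have hfar : ∀ b w, 1 ≤ b → b ≤ 2 → IsFar k b 0 w →
      Forces (blockPeeling k).orient w ((k - 2) * (3 * k)) := fun b w hb hb2 hw =>
    (forces_of_isFar_zero hk hb hw).mono (Nat.mul_le_mul_right _ (by omega))
  have hi' : (∃ b r, b < 2 ∧ r < 2 ∧ i = facet k b r) ∨ i = facet k 0 2 := by
    rw [hv, mem_wrapSet] at hi
    rcases hi with rfl | rfl | rfl | rfl
    · exact Or.inl ⟨0, 0, by omega, by omega, rfl⟩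
    · exact Or.inl ⟨0, 1, by omega, by omega, rfl⟩
    · exact Or.inr rfl
    · exact Or.inl ⟨1, 0, by omega, by omega, rfl⟩
  rcases hi' with ⟨b, r, hb, hr, rfl⟩ | rfl
  · have hu := isNear_of_isFaceSink hk (by omega) hr hrun.isFaceSink
    exact Forces.of_isNear hk (by omega) hr.le hu fun w hw => hfar _ w (by omega) (by omega) hw
  · have hu := IsSlot.of_isFaceSink hk (by omega) (by omega) hrun.isFaceSink
    exact Forces.of_isFar hk (by omega) le_rfl (by omega) hu fun w hw =>
      hfar _ w (by omega) (by omega) hw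

/-- there is a constant `c > 0` such that for every `k ≥ 1` and
`n = 12k+1` there is an AUSO of `C°(n)` on which every possible run of the random
facet algorithm from the global source to the global sink visits at least `c·n²`
vertices. -/
theorem random_facet_quadratic_lower_bound :
    ∃ c : ℝ, 0 < c ∧ ∀ k : ℕ, 1 ≤ k → ∀ n : ℕ, n = 12 * k + 1 →
      ∃ D : DCVert n → DCVert n → Prop,
        (∀ v w : DCVert n, (v.1 ∩ w.1).card = 3 ↔ (D v w ∨ D w v)) ∧
        (∀ v w : DCVert n, ¬ (D v w ∧ D w v)) ∧
        (∀ v : DCVert n, ¬ Relation.TransGen D v v) ∧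
        (∀ T : Finset ℕ, T ⊆ Finset.range n → (∃ v : DCVert n, T ⊆ v.1) →
          ∃! t : DCVert n, T ⊆ t.1 ∧ ∀ w, T ⊆ w.1 → ¬ D t w) ∧
        (∀ (qg t : DCVert n), (∀ w, ¬ D w qg) → (∀ w, ¬ D t w) →
          ∀ l : List (DCVert n), RFRun n D ∅ qg t l → c * (n : ℝ) ^ 2 ≤ l.length) := by
  refine ⟨1 / 676, by norm_num, ?_⟩
  rintro k hk _ rfl
  have heven : Even (12 * k) := ⟨6 * k, by ring⟩
  refine ⟨(blockPeeling k).orient, fun v w => Peeling.orient_adj_iff heven,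
    fun v w h => h.1.2.not_gt h.2.2, fun v h => (Peeling.height_lt_of_transGen h).false,
    fun T _ hT => Peeling.existsUnique_isFaceSink heven hT, fun qg t hqg _ l hrun => ?_⟩
  exact sq_le_length_bound hk hrun.length_pos (forces_of_source hqg t l hrun)
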